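/- arXiv:1910.02794 — 7 statements merged into one kernel-verified Lean document; each statement's English description precedes it below -/
import Mathlib

section
/- Let G be a finite simple graph whose vertex set carries a linear order, let r ∈ ℕ, let M be a distance-r dominating set of G, and let c be the covering map with Voronoi cells H_m. Then for every m ∈ M and every v ∈ H_m there is a path from v to m of length dist(v,m) ≤ r all of whose vertices lie in H_m; in particular, the subgraph of G induced by H_m is connected and every vertex of H_m is within distance r of m inside that induced subgraph. -/
open SimpleGraph

/-- `M` is a distance-`r` dominating set of `G`: every vertex is within graph
distance `r` of some vertex of `M` (expressed via a walk of length `≤ r`). -/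
def IsDistDomSet {V : Type*} (G : SimpleGraph V) (r : ℕ) (M : Set V) : Prop :=
  ∀ v : V, ∃ m ∈ M, ∃ p : G.Walk v m, p.length ≤ r

/-- `c` is the covering map of `M`: it sends each vertex `v` to the vertex `m ∈ M`
minimizing the pair `(dist v m, m)` lexicographically (distance to unreachable
vertices being infinite, so only reachable members of `M` compete). -/
def IsVoronoiCovering {V : Type*} [LinearOrder V] (G : SimpleGraph V) (M : Set V)
    (c : V → V) : Prop :=
  ∀ v : V, c v ∈ M ∧ G.Reachable v (c v) ∧
    ∀ m ∈ M, G.Reachable v m →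
      G.dist v (c v) < G.dist v m ∨ (G.dist v (c v) = G.dist v m ∧ c v ≤ m)

/-- For every `m ∈ M` and every `v` in the Voronoi cell `H_m = {v | c v = m}` there is
a path from `v` to `m` of length `dist v m ≤ r` all of whose vertices lie in `H_m`;
in particular the subgraph induced by `H_m` is connected and every vertex of `H_m`
is within distance `r` of `m` inside that induced subgraph. -/
theorem stmt0 {V : Type*} [Fintype V] [LinearOrder V] (G : SimpleGraph V) (r : ℕ)
    (M : Set V) (hdom : IsDistDomSet G r M) (c : V → V) (hc : IsVoronoiCovering G M c)
    (m : V) (hm : m ∈ M) :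
    (∀ v : V, c v = m → ∃ p : G.Walk v m, p.IsPath ∧ p.length = G.dist v m ∧
      G.dist v m ≤ r ∧ ∀ x ∈ p.support, c x = m) ∧
    (G.induce {v | c v = m}).Connected ∧
    ∃ hmm : c m = m, ∀ (v : V) (hv : c v = m),
      ∃ q : (G.induce {v | c v = m}).Walk ⟨v, hv⟩ ⟨m, hmm⟩, q.length ≤ r := by
  have hmm : c m = m := by
    obtain ⟨-, hr, h⟩ := hc m
    have h0 : G.dist m (c m) = 0 := by
      have := h m hm (Reachable.refl m)
      simp only [SimpleGraph.dist_self] at this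
      omega
    exact (hr.dist_eq_zero_iff.mp h0).symm
  have h1 : ∀ v : V, c v = m → ∃ p : G.Walk v m, p.IsPath ∧ p.length = G.dist v m ∧
      G.dist v m ≤ r ∧ ∀ x ∈ p.support, c x = m := by
    intro v hv
    obtain ⟨-, hr, h⟩ := hc v
    rw [hv] at hr h
    obtain ⟨p, hp, hpl⟩ := hr.exists_path_of_dist
    refine ⟨p, hp, hpl, ?_, ?_⟩
    · obtain ⟨m', hm', q, hq⟩ := hdom v
      have h2 := h m' hm' ⟨q⟩
      have h3 := SimpleGraph.dist_le q
      omega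
    · intro x hx
      obtain ⟨hxM, hxr, hxmin⟩ := hc x
      have hlen : (p.takeUntil x hx).length + (p.dropUntil x hx).length = p.length := by
        rw [← Walk.length_append, Walk.take_spec]
      have h2 := hxmin m hm ⟨p.dropUntil x hx⟩
      have h3 := SimpleGraph.dist_le (p.dropUntil x hx)
      obtain ⟨w, hw⟩ := hxr.exists_walk_length_eq_dist
      have h4 := SimpleGraph.dist_le ((p.takeUntil x hx).append w)
      rw [Walk.length_append] at h4
      have h5 := h (c x) hxM ⟨(p.takeUntil x hx).append w⟩
      rcases h2 with h2 | ⟨h2, h2'⟩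
      · omega
      · rcases h5 with h5 | ⟨h5, h5'⟩
        · omega
        · exact le_antisymm h2' h5'
  have h2 : ∀ (v : V) (hv : c v = m),
      ∃ q : (G.induce {v | c v = m}).Walk ⟨v, hv⟩ ⟨m, hmm⟩, q.length ≤ r := by
    intro v hv
    obtain ⟨p, -, hpl, hr, hs⟩ := h1 v hv
    refine ⟨p.induce {v | c v = m} hs, ?_⟩
    have h3 : (p.induce {v | c v = m} hs).length = p.length := by
      conv_rhs => rw [← Walk.map_induce (s := {v | c v = m}) p hs]
      exact (Walk.length_map _ _).symm
    exact h3.le.trans (hpl.le.trans hr)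
  refine ⟨h1, ?_, hmm, h2⟩
  rw [connected_iff_exists_forall_reachable]
  refine ⟨⟨m, hmm⟩, ?_⟩
  rintro ⟨v, hv⟩
  obtain ⟨q, -⟩ := h2 v hv
  exact ⟨q.reverse⟩
end

section
/- Let G be a finite simple graph whose vertex set carries a linear order, let r ∈ ℕ, suppose G has girth at least 4r+3, let M be a distance-r dominating set of G, and let H_m be the Voronoi cell of m ∈ M under the covering map. Then the subgraph of G induced by H_m is acyclic (hence a tree). -/
open SimpleGraph

lemma exists_short_cycle_aux {V : Type*} (G : SimpleGraph V) {u v : V} (p q : G.Walk u v)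
    (hp : p.IsPath) (hq : q.IsPath) (hne : p ≠ q) :
    ∃ (a : V) (w : G.Walk a a), w.IsCycle ∧ w.length ≤ p.length + q.length := by
  classical
  set H : SimpleGraph V := SimpleGraph.fromEdgeSet {e | e ∈ p.edges ∨ e ∈ q.edges} with hH
  have hedge : ∀ e, e ∈ H.edgeSet ↔ (e ∈ p.edges ∨ e ∈ q.edges) := by
    intro e
    rw [hH, SimpleGraph.edgeSet_fromEdgeSet]
    constructor
    · intro h
      exact h.1
    · intro h
      refine ⟨h, ?_⟩
      have he : e ∈ G.edgeSet := h.elim (p.edges_subset_edgeSet ·) (q.edges_subset_edgeSet ·)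
      exact G.not_isDiag_of_mem_edgeSet he
  have hpH : ∀ e ∈ p.edges, e ∈ H.edgeSet := fun e he => (hedge e).2 (Or.inl he)
  have hqH : ∀ e ∈ q.edges, e ∈ H.edgeSet := fun e he => (hedge e).2 (Or.inr he)
  have hle : H ≤ G := by
    rw [← SimpleGraph.edgeSet_subset_edgeSet]
    intro e he
    exact ((hedge e).1 he).elim (p.edges_subset_edgeSet ·) (q.edges_subset_edgeSet ·)
  have hna : ¬ H.IsAcyclic := by
    intro hac
    have h := hac.path_unique ⟨p.transfer H hpH, hp.transfer hpH⟩ ⟨q.transfer H hqH, hq.transfer hqH⟩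
    have h2 : p.transfer H hpH = q.transfer H hqH := congrArg Subtype.val h
    apply hne
    apply SimpleGraph.Walk.ext_support
    have h3 := congrArg SimpleGraph.Walk.support h2
    simpa using h3
  obtain ⟨a, w, hw, -⟩ := SimpleGraph.exists_egirth_eq_length.2 hna
  refine ⟨a, w.mapLe hle, hw.mapLe hle, ?_⟩
  have hsub : w.edges ⊆ p.edges ++ q.edges := by
    intro e he
    rw [List.mem_append]
    exact (hedge e).1 (w.edges_subset_edgeSet he)
  have h1 := (hw.edges_nodup.subperm hsub).length_le
  simpa using h1

/-- If `G` has girth at least `4r+3` and `M` is a distance-`r` dominating set with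
covering map `c`, then the subgraph induced by each Voronoi cell
`H_m = {v | c v = m}` is acyclic (hence a tree). -/
theorem stmt1 {V : Type*} [Fintype V] [LinearOrder V] (G : SimpleGraph V) (r : ℕ)
    (hgirth : ((4 * r + 3 : ℕ) : ℕ∞) ≤ G.egirth)
    (M : Set V) (hdom : IsDistDomSet G r M) (c : V → V) (hc : IsVoronoiCovering G M c)
    (m : V) (hm : m ∈ M) :
    (G.induce {v | c v = m}).IsAcyclic := by
  classical
  have hdist : ∀ v, c v = m → G.Reachable v m ∧ G.dist v m ≤ r := by
    intro v hv
    obtain ⟨-, h2, h3⟩ := hc v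
    rw [hv] at h2 h3
    refine ⟨h2, ?_⟩
    obtain ⟨m', hm', p, hp⟩ := hdom v
    have h4 := h3 m' hm' ⟨p⟩
    have h5 := SimpleGraph.dist_le p
    omega
  intro a w hw
  have hw' := hw.map (f := (SimpleGraph.Embedding.induce {v | c v = m} (G := G)).toHom)
    (SimpleGraph.Embedding.induce {v | c v = m} (G := G)).injective
  generalize hW : w.map (SimpleGraph.Embedding.induce {v | c v = m} (G := G)).toHom = W at hw'
  have hsupp : ∀ x ∈ W.support, c x = m := by
    intro x hx
    rw [← hW, SimpleGraph.Walk.support_map, List.mem_map] at hx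
    obtain ⟨y, -, rfl⟩ := hx
    exact y.2
  obtain ⟨v, hv, hmax⟩ := W.support.toFinset.exists_max_image (fun x => G.dist x m)
    ⟨_, List.mem_toFinset.2 W.start_mem_support⟩
  rw [List.mem_toFinset] at hv
  have hC := hw'.rotate hv
  set C := W.rotate v hv with hCdef
  have hCs : ∀ x ∈ C.support, c x = m ∧ G.dist x m ≤ G.dist v m := by
    intro x hx
    have : x ∈ W.support := by
      exact (W.mem_support_rotate_iff v hv).1 hx
    exact ⟨hsupp x this, hmax x (List.mem_toFinset.2 this)⟩
  have key : ∀ x, G.Adj v x → x ∈ C.support →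
      ∃ p : G.Walk v m, p.IsPath ∧ p.length ≤ r + 1 ∧ p.snd = x := by
    intro x hvx hx
    obtain ⟨hx1, hx2⟩ := hCs x hx
    obtain ⟨hr, hd⟩ := hdist x hx1
    obtain ⟨p, hp, hpl⟩ := hr.exists_path_of_dist
    refine ⟨SimpleGraph.Walk.cons hvx p, ?_, ?_, ?_⟩
    · rw [SimpleGraph.Walk.cons_isPath_iff]
      refine ⟨hp, fun hvp => ?_⟩
      have h1 := SimpleGraph.dist_le (p.dropUntil v hvp)
      have h2 := congrArg SimpleGraph.Walk.length (p.take_spec hvp)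
      rw [SimpleGraph.Walk.length_append] at h2
      have h3 : (p.takeUntil v hvp).length = 0 := by omega
      exact hvx.ne (SimpleGraph.Walk.eq_of_length_eq_zero h3).symm
    · simp only [SimpleGraph.Walk.length_cons]
      omega
    · simp
  obtain ⟨p, hp, hpl, hps⟩ := key C.snd (C.adj_snd hC.not_nil) (C.getVert_mem_support _)
  obtain ⟨q, hq, hql, hqs⟩ := key C.penultimate (C.adj_penultimate hC.not_nil).symm
    (C.getVert_mem_support _)
  have hpq : p ≠ q := by
    rintro rfl
    exact hC.snd_ne_penultimate (hps.symm.trans hqs)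
  obtain ⟨b, D, hD, hDl⟩ := exists_short_cycle_aux G p q hp hq hpq
  have h := hgirth.trans (SimpleGraph.egirth_le_length hD)
  have h' : 4 * r + 3 ≤ D.length := by exact_mod_cast h
  omega
end

section
/- Let G be a finite simple graph whose vertex set carries a linear order, let r ∈ ℕ, suppose G has girth at least 4r+3, let M be a distance-r dominating set of G, and let H_m be the Voronoi cells under the covering map. Then for any two distinct m, n ∈ M there is at most one edge of G having one endpoint in H_m and the other endpoint in H_n. -/
open SimpleGraph

theorem voronoi_walk {V : Type*} [LinearOrder V] (G : SimpleGraph V)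
    (M : Set V) (c : V → V) (hc : IsVoronoiCovering G M c) (m : V) (hm : m ∈ M) :
    ∀ (u : V) (p : G.Walk u m), p.length = G.dist u m → c u = m →
      ∀ w ∈ p.support, c w = m := by
  intro u p
  induction p with
  | nil => intro _ h w hw; simp at hw; rw [hw]; exact h
  | @cons u u' m h q ih =>
    intro hl hcu w hw
    rw [Walk.support_cons, List.mem_cons] at hw
    rw [Walk.length_cons] at hl
    have h1 : G.dist u' m ≤ q.length := dist_le q
    obtain ⟨q', hq'⟩ := q.reachable.exists_walk_length_eq_dist
    have h2 : G.dist u m ≤ G.dist u' m + 1 := by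
      rw [← hq']; exact dist_le (Walk.cons h q')
    obtain ⟨hkM, hkr, hk⟩ := hc u'
    obtain ⟨k', hk'⟩ := hkr.exists_walk_length_eq_dist
    have h3 : G.dist u (c u') ≤ G.dist u' (c u') + 1 := by
      rw [← hk']; exact dist_le (Walk.cons h k')
    have h4 := hk m hm q.reachable
    have h5 := (hc u).2.2 (c u') hkM (h.reachable.trans hkr)
    rw [hcu] at h5
    have h6 : c u' = m := by
      rcases h4 with h4 | ⟨h4, h4'⟩
      · omega
      · rcases h5 with h5 | ⟨h5, h5'⟩
        · omega
        · exact le_antisymm h4' h5'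
    rcases hw with rfl | hw
    · exact hcu
    · exact ih hm (by omega) h6 w hw

theorem voronoi_exists {V : Type*} [LinearOrder V] (G : SimpleGraph V) (r : ℕ)
    (M : Set V) (hdom : IsDistDomSet G r M) (c : V → V) (hc : IsVoronoiCovering G M c)
    (m : V) (hm : m ∈ M) (u : V) (hu : c u = m) :
    ∃ p : G.Walk u m, p.length ≤ r ∧ ∀ w ∈ p.support, c w = m := by
  obtain ⟨_, hr, hmin⟩ := hc u
  rw [hu] at hr hmin
  obtain ⟨p, hp⟩ := hr.exists_walk_length_eq_dist
  refine ⟨p, ?_, voronoi_walk G M c hc m hm u p hp hu⟩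
  obtain ⟨m', hm', q, hq⟩ := hdom u
  have h1 := hmin m' hm' q.reachable
  have h2 := dist_le q
  omega

theorem voronoi_exists_two {V : Type*} [LinearOrder V] (G : SimpleGraph V) (r : ℕ)
    (M : Set V) (hdom : IsDistDomSet G r M) (c : V → V) (hc : IsVoronoiCovering G M c)
    (m : V) (hm : m ∈ M) (u s : V) (hu : c u = m) (hs : c s = m) :
    ∃ p : G.Walk u s, p.length ≤ 2 * r ∧ ∀ w ∈ p.support, c w = m := by
  obtain ⟨p, hp, hp'⟩ := voronoi_exists G r M hdom c hc m hm u hu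
  obtain ⟨q, hq, hq'⟩ := voronoi_exists G r M hdom c hc m hm s hs
  refine ⟨p.append q.reverse, ?_, ?_⟩
  · rw [Walk.length_append, Walk.length_reverse]; omega
  · intro w hw
    rw [Walk.mem_support_append_iff, Walk.support_reverse, List.mem_reverse] at hw
    exact hw.elim (hp' w) (hq' w)

/-- If `G` has girth at least `4r+3`, then for any two distinct `m, n ∈ M` there is
at most one edge of `G` with one endpoint in the Voronoi cell `H_m` and the other
in `H_n`. -/
theorem stmt2 {V : Type*} [Fintype V] [LinearOrder V] (G : SimpleGraph V) (r : ℕ)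
    (hgirth : ((4 * r + 3 : ℕ) : ℕ∞) ≤ G.egirth)
    (M : Set V) (hdom : IsDistDomSet G r M) (c : V → V) (hc : IsVoronoiCovering G M c)
    (m n : V) (hm : m ∈ M) (hn : n ∈ M) (hmn : m ≠ n) :
    ∀ u v s t : V, G.Adj u v → G.Adj s t →
      c u = m → c v = n → c s = m → c t = n → u = s ∧ v = t := by
  intro u v s t huv hst hu hv hs ht
  by_contra hne
  obtain ⟨p, hp, hp'⟩ := voronoi_exists_two G r M hdom c hc n hn v t hv ht
  obtain ⟨q, hq, hq'⟩ := voronoi_exists_two G r M hdom c hc m hm s u hs hu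
  let w : G.Walk v u := p.append (Walk.cons hst.symm q)
  have hwl : w.length ≤ 4 * r + 1 := by
    simp only [w, Walk.length_append, Walk.length_cons]; omega
  have hwe : s(u, v) ∉ w.edges := by
    intro h
    simp only [w, Walk.edges_append, Walk.edges_cons, List.mem_append, List.mem_cons] at h
    rcases h with h | h | h
    · exact hmn (hu.symm.trans (hp' u (p.fst_mem_support_of_mem_edges h)))
    · rw [Sym2.eq_iff] at h
      rcases h with ⟨h, _⟩ | ⟨h, h'⟩
      · exact hmn (hu.symm.trans (h ▸ ht))
      · exact hne ⟨h, h'⟩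
    · exact hmn ((hq' v (q.snd_mem_support_of_mem_edges h)).symm.trans hv)
  have hcyc : (Walk.cons huv w.bypass).IsCycle :=
    Path.cons_isCycle ⟨w.bypass, w.bypass_isPath⟩ huv
      (fun h => hwe (w.edges_bypass_subset h))
  have h1 := hgirth.trans (egirth_le_length hcyc)
  have h2 : 4 * r + 3 ≤ (Walk.cons huv w.bypass).length := by exact_mod_cast h1
  have h3 := w.length_bypass_le
  rw [Walk.length_cons] at h2
  omega
end

section
/- Let G be a finite simple graph, let r ∈ ℕ, and let S and T be disjoint vertex sets each of which induces a connected subgraph of G, such that S contains a vertex whose distance (measured inside the subgraph induced by S) to every vertex of S is at most r, and likewise for T. If there exist two distinct edges of G each having one endpoint in S and the other endpoint in T, then G contains a cycle of length at most 4r+2. -/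
open SimpleGraph

/-- If `S` and `T` are disjoint vertex sets, each inducing a connected subgraph of
radius at most `r` (measured inside the induced subgraph), and there are two
distinct edges of `G` between `S` and `T`, then `G` contains a cycle of length at
most `4r+2`. -/
theorem stmt4 {V : Type*} [Fintype V] (G : SimpleGraph V) (r : ℕ) (S T : Set V)
    (hdisj : Disjoint S T)
    (hSconn : (G.induce S).Connected) (hTconn : (G.induce T).Connected)
    (hS : ∃ s₀ : S, ∀ x : S, ∃ p : (G.induce S).Walk s₀ x, p.length ≤ r)
    (hT : ∃ t₀ : T, ∀ x : T, ∃ p : (G.induce T).Walk t₀ x, p.length ≤ r)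
    (u v s t : V) (hu : u ∈ S) (hv : v ∈ T) (hs : s ∈ S) (ht : t ∈ T)
    (huv : G.Adj u v) (hst : G.Adj s t)
    (hne : (s(u, v) : Sym2 V) ≠ s(s, t)) :
    ∃ (x : V) (p : G.Walk x x), p.IsCycle ∧ p.length ≤ 4 * r + 2 := by
  classical
  have key : ∀ (A : Set V), (∃ s₀ : A, ∀ x : A, ∃ p : (G.induce A).Walk s₀ x, p.length ≤ r) →
      ∀ a b : V, a ∈ A → b ∈ A →
        ∃ p : G.Walk a b, p.length ≤ 2 * r ∧ ∀ x ∈ p.support, x ∈ A := by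
    rintro A ⟨c, hc⟩ a b ha hb
    obtain ⟨p, hp⟩ := hc ⟨a, ha⟩
    obtain ⟨q, hq⟩ := hc ⟨b, hb⟩
    refine ⟨(p.reverse.append q).map (Embedding.induce A).toHom, ?_, ?_⟩
    · have h1 : ((p.reverse.append q).map (Embedding.induce A).toHom).length ≤ 2 * r := by
        rw [Walk.length_map, Walk.length_append, Walk.length_reverse]
        omega
      exact h1
    · intro x hx
      have h2 : x ∈ ((p.reverse.append q).map (Embedding.induce A).toHom).support := hx
      rw [Walk.support_map, List.mem_map] at h2
      obtain ⟨y, -, rfl⟩ := h2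
      exact y.2
  obtain ⟨p, hp, hpS⟩ := key S hS u s hu hs
  obtain ⟨q, hq, hqT⟩ := key T hT t v ht hv
  have hW : s(v, u) ∉ (p.append (Walk.cons hst q)).edges := by
    intro h
    rw [Walk.edges_append, Walk.edges_cons, List.mem_append, List.mem_cons] at h
    rcases h with h | h | h
    · exact Set.disjoint_left.1 hdisj (hpS _ (p.fst_mem_support_of_mem_edges h)) hv
    · exact hne (Sym2.eq_swap.trans h)
    · exact Set.disjoint_left.1 hdisj hu (hqT _ (q.snd_mem_support_of_mem_edges h))
  refine ⟨v, Walk.cons huv.symm (p.append (Walk.cons hst q)).bypass, ?_, ?_⟩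
  · rw [Walk.cons_isCycle_iff]
    exact ⟨Walk.bypass_isPath _, fun h => hW (Walk.edges_bypass_subset_edges _ h)⟩
  · have h := Walk.length_bypass_le_length (p.append (Walk.cons hst q))
    rw [Walk.length_append, Walk.length_cons] at h
    rw [Walk.length_cons]
    omega
end

section
/- Let G be a finite simple graph, let r ≥ 1, let v and w be adjacent vertices, and let S be a set of vertices with v ∈ S and w ∉ S such that (i) every vertex of S has graph distance at most r−1 from v, and (ii) every walk in G from v to a vertex outside S passes through w. Then N^r[v] ⊆ N^r[w]; moreover, if in addition some vertex t of G has dist(t,v) = r+1, then |N^r(v)| < |N^r(w)|. -/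
open SimpleGraph

/-- The closed distance-`r` ball around `v`: all vertices joined to `v` by a walk
of length at most `r`. -/
def closedBall {V : Type*} (G : SimpleGraph V) (v : V) (r : ℕ) : Set V :=
  {u | ∃ p : G.Walk v u, p.length ≤ r}

/-- Let `v` and `w` be adjacent, `v ∈ S`, `w ∉ S`, every vertex of `S` within
distance `r-1` of `v`, and every walk from `v` to a vertex outside `S` passes
through `w`.  Then `N^r[v] ⊆ N^r[w]`, and if moreover some vertex has distance
exactly `r+1` from `v`, then `|N^r(v)| < |N^r(w)|`. -/
theorem stmt6 {V : Type*} [Fintype V] [DecidableEq V] (G : SimpleGraph V)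
    (r : ℕ) (hr : 1 ≤ r) (v w : V) (hadj : G.Adj v w)
    (S : Set V) (hvS : v ∈ S) (hwS : w ∉ S)
    (hSball : ∀ x ∈ S, ∃ p : G.Walk x v, p.length ≤ r - 1)
    (hcut : ∀ x : V, x ∉ S → ∀ p : G.Walk v x, w ∈ p.support) :
    closedBall G v r ⊆ closedBall G w r ∧
    ((∃ t : V, G.dist t v = r + 1) →
      (closedBall G v r \ {v}).ncard < (closedBall G w r \ {w}).ncard) := by
  have hvw : v ≠ w := hadj.ne
  have hsub : closedBall G v r ⊆ closedBall G w r := by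
    rintro u ⟨p, hp⟩
    by_cases hu : u ∈ S
    · obtain ⟨q, hq⟩ := hSball u hu
      refine ⟨Walk.cons hadj.symm q.reverse, ?_⟩
      simp only [Walk.length_cons, Walk.length_reverse]
      omega
    · have hw := hcut u hu p
      exact ⟨p.dropUntil w hw, (p.length_dropUntil_le hw).trans hp⟩
  refine ⟨hsub, ?_⟩
  rintro ⟨t, ht⟩
  have htS : t ∉ S := by
    intro h
    obtain ⟨q, hq⟩ := hSball t h
    have := dist_le q
    omega
  have htv : t ∉ closedBall G v r := by
    rintro ⟨p, hp⟩
    have := dist_le p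
    rw [dist_comm] at this
    omega
  have hreach : G.Reachable v t := by
    rw [dist_comm] at ht
    exact Reachable.of_dist_ne_zero (by omega)
  have htw : t ∈ closedBall G w r := by
    obtain ⟨p, hp⟩ := hreach.exists_walk_length_eq_dist
    rw [dist_comm, ht] at hp
    have hw := hcut t htS p
    refine ⟨p.dropUntil w hw, ?_⟩
    have h1 := congrArg Walk.length (p.take_spec hw)
    rw [Walk.length_append] at h1
    have h2 : (p.takeUntil w hw).length ≠ 0 := fun h => hvw (Walk.eq_of_length_eq_zero h)
    omega
  have hlt : (closedBall G v r).ncard < (closedBall G w r).ncard :=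
    Set.ncard_lt_ncard ⟨hsub, fun h => htv (h htw)⟩ (Set.toFinite _)
  have hv : v ∈ closedBall G v r := ⟨Walk.nil, by simp⟩
  have hw : w ∈ closedBall G w r := ⟨Walk.nil, by simp⟩
  have e1 := Set.ncard_sdiff_singleton_add_one hv (Set.toFinite _)
  have e2 := Set.ncard_sdiff_singleton_add_one hw (Set.toFinite _)
  omega
end

section
/- Let G be a finite simple connected graph whose vertex set carries a linear order, let r ≥ 1, suppose G has girth at least 4r+3, and let M be a distance-r dominating set of G such that no single vertex of G forms a distance-r dominating set. Let c be the covering map with Voronoi cells H_m, and for m ∈ M let T_m ⊆ H_m be the set of vertices lying on some shortest path inside the subgraph induced by H_m from m to a vertex u ∈ H_m that has a neighbor outside H_m. Suppose u and v are vertices with c(u) = c(v) = m and dist(u,v) ≤ r, and v is the lexicographic maximum of the pairs (|N^r(w)|, w) over all w ∈ N^r[u]. Then v ∈ T_m. -/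
open SimpleGraph

theorem aux_unique {V : Type*} (G : SimpleGraph V) {a b : V} (p q : G.Walk a b)
    (hp : p.IsPath) (hq : q.IsPath) (hlt : ((p.length + q.length : ℕ) : ℕ∞) < G.egirth) :
    p = q := by
  classical
  by_contra hne
  set S : Set (Sym2 V) := {e | e ∈ p.edges ∨ e ∈ q.edges} with hS
  set H : SimpleGraph V := SimpleGraph.fromEdgeSet S with hH
  have hHG : H ≤ G := by
    intro x y hxy
    rw [hH, SimpleGraph.fromEdgeSet_adj] at hxy
    rcases hxy.1 with h | h
    · exact p.adj_of_mem_edges h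
    · exact q.adj_of_mem_edges h
  have hmem : ∀ e, e ∈ p.edges ∨ e ∈ q.edges → e ∈ H.edgeSet := by
    intro e he
    have heG : e ∈ G.edgeSet := by
      rcases he with h | h
      · exact p.edges_subset_edgeSet h
      · exact q.edges_subset_edgeSet h
    rw [hH, SimpleGraph.edgeSet_fromEdgeSet]
    exact ⟨he, fun hd => G.not_isDiag_of_mem_edgeSet heG hd⟩
  have hac : ¬ H.IsAcyclic := by
    intro hac
    have h := hac.path_unique ⟨p.transfer H (fun e he => hmem e (Or.inl he)), hp.transfer _⟩
      ⟨q.transfer H (fun e he => hmem e (Or.inr he)), hq.transfer _⟩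
    have h2 := congrArg (fun w : H.Path a b => (w : H.Walk a b).support) h
    simp only [SimpleGraph.Walk.support_transfer] at h2
    exact hne (SimpleGraph.Walk.ext_support h2)
  unfold SimpleGraph.IsAcyclic at hac
  push Not at hac
  obtain ⟨x, w, hw⟩ := hac
  have hlen : w.length ≤ p.length + q.length := by
    have h1 : w.edges.toFinset ⊆ (p.edges ++ q.edges).toFinset := by
      intro e he
      rw [List.mem_toFinset] at he ⊢
      have := w.edges_subset_edgeSet he
      rw [hH, SimpleGraph.edgeSet_fromEdgeSet] at this
      exact List.mem_append.2 this.1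
    have h2 := Finset.card_le_card h1
    rw [List.toFinset_card_of_nodup hw.edges_nodup, SimpleGraph.Walk.length_edges] at h2
    have h3 := List.toFinset_card_le (p.edges ++ q.edges)
    simp only [List.length_append, SimpleGraph.Walk.length_edges] at h3
    omega
  have hge : G.egirth ≤ ((w.mapLe hHG).length : ℕ∞) :=
    SimpleGraph.egirth_le_length (hw.mapLe hHG)
  have : ((w.mapLe hHG).length : ℕ∞) ≤ ((p.length + q.length : ℕ) : ℕ∞) := by
    rw [SimpleGraph.Walk.length_mapLe]
    exact_mod_cast hlen
  exact absurd (hge.trans this) (not_le.2 hlt)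

theorem aux_parent {V : Type*} (G : SimpleGraph V) (hconn : G.Connected) (r : ℕ)
    (hgirth : ((4 * r + 3 : ℕ) : ℕ∞) ≤ G.egirth) (m x y z : V) (hx : G.dist m x ≤ r)
    (hyx : G.Adj y x) (hzx : G.Adj z x) (hy : G.dist m y + 1 = G.dist m x)
    (hz : G.dist m z + 1 = G.dist m x) : y = z := by
  obtain ⟨p, hp⟩ := hconn.exists_walk_length_eq_dist m y
  obtain ⟨q, hq⟩ := hconn.exists_walk_length_eq_dist m z
  have h1 : (p.concat hyx).IsPath :=
    SimpleGraph.Walk.isPath_of_length_eq_dist _ (by rw [SimpleGraph.Walk.length_concat]; omega)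
  have h2 : (q.concat hzx).IsPath :=
    SimpleGraph.Walk.isPath_of_length_eq_dist _ (by rw [SimpleGraph.Walk.length_concat]; omega)
  have h := aux_unique G _ _ h1 h2 (by
    refine lt_of_lt_of_le ?_ hgirth
    rw [SimpleGraph.Walk.length_concat, SimpleGraph.Walk.length_concat]
    exact_mod_cast (by omega))
  have h3 := congrArg SimpleGraph.Walk.penultimate h
  simpa using h3

theorem aux_level {V : Type*} (G : SimpleGraph V) (hconn : G.Connected) (r : ℕ)
    (hgirth : ((4 * r + 3 : ℕ) : ℕ∞) ≤ G.egirth) (m x y : V) (hx : G.dist m x ≤ r)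
    (hxy : G.Adj x y) : G.dist m x ≠ G.dist m y := by
  classical
  intro he
  obtain ⟨p, hp⟩ := hconn.exists_walk_length_eq_dist m x
  obtain ⟨q, hq⟩ := hconn.exists_walk_length_eq_dist m y
  have hpp := SimpleGraph.Walk.isPath_of_length_eq_dist _ hp
  have h2 := SimpleGraph.Walk.isPath_of_length_eq_dist _ hq
  have hy : y ∉ p.support := by
    intro hy
    have h3 := SimpleGraph.dist_le (p.takeUntil y hy)
    have h4 := congrArg SimpleGraph.Walk.length (p.take_spec hy)
    rw [SimpleGraph.Walk.length_append] at h4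
    have h5 : (p.dropUntil y hy).length = 0 := by omega
    exact hxy.ne (SimpleGraph.Walk.eq_of_length_eq_zero h5).symm
  have h1 : (p.concat hxy).IsPath := hpp.concat hy hxy
  have h := aux_unique G _ _ h1 h2 (by
    refine lt_of_lt_of_le ?_ hgirth
    rw [SimpleGraph.Walk.length_concat]
    exact_mod_cast (by omega))
  have h3 := congrArg SimpleGraph.Walk.length h
  rw [SimpleGraph.Walk.length_concat] at h3
  omega

theorem aux_cross {V : Type*} (G : SimpleGraph V) (D : V → Prop) (t : V)
    (hD : ∀ x y, D x → ¬ D y → G.Adj x y → y = t) :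
    ∀ {a b : V} (w : G.Walk a b), D a → ¬ D b → G.dist t b + 1 ≤ w.length := by
  intro a b w
  induction w with
  | nil => intro h1 h2; exact absurd h1 h2
  | @cons a a' b h w ih =>
    intro h1 h2
    rw [SimpleGraph.Walk.length_cons]
    by_cases h3 : D a'
    · have := ih h3 h2; omega
    · have := hD _ _ h1 h3 h
      subst this
      have := SimpleGraph.dist_le w
      omega

theorem aux_mid {V : Type*} (G : SimpleGraph V) (hconn : G.Connected) (a b : V) (k : ℕ)
    (hk : k ≤ G.dist a b) : ∃ z, G.dist a z = k ∧ G.dist a z + G.dist z b = G.dist a b := by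
  obtain ⟨p, hp⟩ := hconn.exists_walk_length_eq_dist a b
  refine ⟨p.getVert k, ?_⟩
  have h1 := SimpleGraph.dist_le (p.take k)
  have h2 := SimpleGraph.dist_le (p.drop k)
  rw [SimpleGraph.Walk.take_length] at h1
  rw [SimpleGraph.Walk.drop_length] at h2
  have h3 := hconn.dist_triangle (u := a) (v := p.getVert k) (w := b)
  omega

/-- Suppose `G` is connected with girth at least `4r+3`, `M` is a distance-`r`
dominating set, no single vertex dominates all of `G`, and `c` is the covering map.
If `u` and `v` lie in the Voronoi cell of `m` with `dist u v ≤ r`, and `v`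
lexicographically maximizes `(|N^r(w)|, w)` over all `w ∈ N^r[u]`, then `v` lies
on some shortest path, inside the subgraph induced by the cell, from `m` to a
vertex of the cell having a neighbor outside the cell. -/
theorem stmt13 {V : Type*} [Fintype V] [LinearOrder V] (G : SimpleGraph V)
    (hconn : G.Connected) (r : ℕ) (hr : 1 ≤ r)
    (hgirth : ((4 * r + 3 : ℕ) : ℕ∞) ≤ G.egirth)
    (M : Set V) (hdom : IsDistDomSet G r M)
    (hnosingle : ∀ x : V, ¬ IsDistDomSet G r {x})
    (c : V → V) (hc : IsVoronoiCovering G M c)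
    (m u v : V) (hu : c u = m) (hv : c v = m) (huv : G.dist u v ≤ r)
    (hmax : ∀ w : V, G.dist u w ≤ r →
      ({x : V | G.dist x w ≤ r ∧ x ≠ w}.ncard < {x : V | G.dist x v ≤ r ∧ x ≠ v}.ncard ∨
       ({x : V | G.dist x w ≤ r ∧ x ≠ w}.ncard = {x : V | G.dist x v ≤ r ∧ x ≠ v}.ncard ∧
        w ≤ v))) :
    ∃ (u' : V), c u' = m ∧ (∃ y : V, G.Adj u' y ∧ c y ≠ m) ∧
      ∃ p : G.Walk m u',
        (∀ x ∈ p.support, c x = m) ∧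
        (∀ q : G.Walk m u', (∀ x ∈ q.support, c x = m) → p.length ≤ q.length) ∧
        v ∈ p.support := by
  classical
  have tri : ∀ a b d : V, G.dist a d ≤ G.dist a b + G.dist b d :=
    fun a b d => hconn.dist_triangle
  have sy : ∀ a b : V, G.dist a b = G.dist b a := fun a b => SimpleGraph.dist_comm
  have hcell : ∀ x, c x = m → G.dist m x ≤ r := by
    intro x hx
    obtain ⟨m', hm', p, hp⟩ := hdom x
    have h1 := SimpleGraph.dist_le p
    have h2 := (hc x).2.2 m' hm' ⟨p⟩
    rw [hx] at h2
    have := sy m x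
    omega
  have hclosed : ∀ x z, c x = m → G.dist m z + G.dist z x = G.dist m x → c z = m := by
    intro x z hx hz
    have hm : m ∈ M := hx ▸ (hc x).1
    have h1 := (hc x).2.2 (c z) (hc z).1 (hconn x (c z))
    have h2 := (hc z).2.2 m hm (hconn z m)
    rw [hx] at h1
    have h3 := tri x z (c z)
    have := sy m z
    have := sy x z
    have := sy m x
    have h4 : m ≤ c z := by
      rcases h1 with h | h
      · omega
      · exact h.2
    have h5 : c z ≤ m := by
      rcases h2 with h | h
      · omega
      · exact h.2
    exact le_antisymm h5 h4
  by_contra hcon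
  -- descendants of v
  let D : V → Prop := fun x => c x = m ∧ G.dist m v + G.dist v x = G.dist m x
  have hin : ∀ x, D x → ∀ y, G.Adj x y → c y = m := by
    intro x hx y hxy
    by_contra hy
    apply hcon
    obtain ⟨p, hp⟩ := hconn.exists_walk_length_eq_dist m v
    obtain ⟨q, hq⟩ := hconn.exists_walk_length_eq_dist v x
    have hpq : (p.append q).length = G.dist m x := by
      rw [SimpleGraph.Walk.length_append, hp, hq, hx.2]
    refine ⟨x, hx.1, ⟨y, hxy, hy⟩, p.append q, ?_, ?_, ?_⟩
    · intro z hz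
      apply hclosed x z hx.1
      have h1 := SimpleGraph.dist_le ((p.append q).takeUntil z hz)
      have h2 := SimpleGraph.dist_le ((p.append q).dropUntil z hz)
      have h4 := congrArg SimpleGraph.Walk.length ((p.append q).take_spec hz)
      rw [SimpleGraph.Walk.length_append] at h4
      have := tri m z x
      omega
    · intro q' _
      rw [hpq]
      exact SimpleGraph.dist_le q'
    · rw [SimpleGraph.Walk.mem_support_append_iff]
      exact Or.inl p.end_mem_support
  have hDv : D v := ⟨hv, by simp⟩
  have hvm : v ≠ m := by
    intro h
    subst h
    have hall : ∀ x, c x = v := by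
      intro x
      by_contra hx
      obtain ⟨w, hw⟩ := hconn.exists_walk_length_eq_dist v x
      have := aux_cross G (fun z => c z = v) v (by
        intro a b ha hb hab
        exact absurd (hin a ⟨ha, by simp⟩ b hab) hb) w hv hx
      omega
    apply hnosingle v
    intro x
    obtain ⟨w, hw⟩ := hconn.exists_walk_length_eq_dist x v
    have := hcell x (hall x)
    have := sy x v
    exact ⟨v, rfl, w, by omega⟩
  have hpos : 0 < G.dist m v := hconn.pos_dist_of_ne hvm.symm
  obtain ⟨t, ht1, ht2⟩ := aux_mid G hconn m v (G.dist m v - 1) (by omega)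
  have htv : G.Adj t v := by
    rw [← SimpleGraph.dist_eq_one_iff_adj]; omega
  have hcross : ∀ x y, D x → ¬ D y → G.Adj x y → y = t := by
    intro x y hx hy hxy
    have hym := hin x hx y hxy
    have hxr := hcell x hx.1
    have hl := aux_level G hconn r hgirth m x y hxr hxy
    have h1 : G.dist x y = 1 := SimpleGraph.dist_eq_one_iff_adj.2 hxy
    have h2 := tri m x y
    have h3 := tri m y x
    have h4 := tri v x y
    have h5 := tri m v y
    have h6 := sy x y
    have h7 := hx.2
    have h8 : ¬ (G.dist m v + G.dist v y = G.dist m y) := fun h => hy ⟨hym, h⟩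
    have hyx : G.dist m y + 1 = G.dist m x := by omega
    by_cases hxv : x = v
    · subst hxv
      exact aux_parent G hconn r hgirth m x y t hxr hxy.symm htv hyx (by omega)
    · exfalso
      have hp2 : 0 < G.dist v x := hconn.pos_dist_of_ne (Ne.symm hxv)
      obtain ⟨s, hs1, hs2⟩ := aux_mid G hconn v x (G.dist v x - 1) (by omega)
      have hsx : G.Adj s x := by
        rw [← SimpleGraph.dist_eq_one_iff_adj]; omega
      have h9 := tri m v s
      have h10 := tri m s x
      have hys := aux_parent G hconn r hgirth m x y s hxr hxy.symm hsx hyx (by omega)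
      subst hys
      omega
  have hdist : ∀ a b, D a → ¬ D b → G.dist t b + 1 ≤ G.dist a b := by
    intro a b ha hb
    obtain ⟨w, hw⟩ := hconn.exists_walk_length_eq_dist a b
    rw [← hw]
    exact aux_cross G D t hcross w ha hb
  have hDt : ∀ x, D x → G.dist t x ≤ r := by
    intro x hx
    have h1 := hcell x hx.1
    have h2 := hx.2
    have h3 := tri t v x
    omega
  have hsub : ∀ x, G.dist x v ≤ r → G.dist x t ≤ r := by
    intro x hx
    rw [sy x t]
    by_cases h : D x
    · exact hDt x h
    · have := hdist v x hDv h
      have := sy x v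
      omega
  obtain ⟨x, hx⟩ : ∃ x, r < G.dist t x := by
    by_contra hno
    push Not at hno
    apply hnosingle t
    intro x
    obtain ⟨w, hw⟩ := hconn.exists_walk_length_eq_dist x t
    have := hno x
    have := sy x t
    exact ⟨t, rfl, w, by omega⟩
  have hxD : ¬ D x := fun h => by have := hDt x h; omega
  obtain ⟨x', hx1, hx2⟩ := aux_mid G hconn t x r hx.le
  have hxD' : ¬ D x' := fun h => by have := hdist x' x h hxD; omega
  have hx3 := hdist v x' hDv hxD'
  have hut : G.dist u t ≤ r := hsub u huv
  have hball : ∀ w : V, {x : V | G.dist x w ≤ r ∧ x ≠ w}.ncard + 1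
      = {x : V | G.dist x w ≤ r}.ncard := by
    intro w
    have : {x : V | G.dist x w ≤ r ∧ x ≠ w} = {x : V | G.dist x w ≤ r} \ {w} := by
      ext z; simp
    rw [this]
    exact Set.ncard_sdiff_singleton_add_one (by simp) (Set.toFinite _)
  have hlt : {x : V | G.dist x v ≤ r}.ncard < {x : V | G.dist x t ≤ r}.ncard := by
    apply Set.ncard_lt_ncard _ (Set.toFinite _)
    refine ⟨hsub, fun h => ?_⟩
    have h1 : G.dist x' v ≤ r := h (show G.dist x' t ≤ r by rw [sy]; omega)
    have := sy x' v
    omega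
  have h1 := hball v
  have h2 := hball t
  have h3 := hmax t hut
  omega
end

section
/- Let G be a finite simple graph whose vertex set carries a linear order, let r ∈ ℕ, let M be a distance-r dominating set of G with covering map c and Voronoi cells H_m. For m ∈ M let T_m ⊆ H_m be the union, over all edges {u,v} of G with c(u) = m and c(v) ≠ m, of the vertex sets of shortest paths inside the subgraph induced by H_m from u to m, and let T = ⋃_{m ∈ M} T_m. Let E' be the set of edges of G whose two endpoints lie in distinct Voronoi cells. Then |T| ≤ |M| + 2r·|E'|. -/
open SimpleGraph

theorem voronoi_geodesic {V : Type*} [LinearOrder V] (G : SimpleGraph V)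
    (M : Set V) (c : V → V) (hc : IsVoronoiCovering G M c) (u : V)
    (q : G.Walk u (c u)) (hq : q.length = G.dist u (c u)) :
    ∀ x ∈ q.support, c x = c u := by
  classical
  intro x hx
  have hlen : (q.takeUntil x hx).length + (q.dropUntil x hx).length = q.length := by
    rw [← SimpleGraph.Walk.length_append, SimpleGraph.Walk.take_spec]
  have h1 : G.dist x (c u) ≤ (q.dropUntil x hx).length := SimpleGraph.dist_le _
  obtain ⟨hxM, hxr, hxmin⟩ := hc x
  obtain ⟨huM, hur, humin⟩ := hc u
  obtain ⟨w, hw⟩ := hxr.exists_walk_length_eq_dist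
  have h2 : G.dist u (c x) ≤ (q.takeUntil x hx).length + w.length := by
    rw [← SimpleGraph.Walk.length_append]
    exact SimpleGraph.dist_le _
  have h3 := hxmin (c u) huM ⟨q.dropUntil x hx⟩
  have h4 := humin (c x) hxM ⟨(q.takeUntil x hx).append w⟩
  rcases h3 with h3 | ⟨h3, h3'⟩
  · rcases h4 with h4 | ⟨h4, h4'⟩ <;> omega
  · rcases h4 with h4 | ⟨h4, h4'⟩
    · omega
    · exact le_antisymm h3' h4'

/-- Let `M` be a distance-`r` dominating set with covering map `c` and Voronoi
cells `H_m = {x | c x = m}`.  For each vertex `u` of a cell `H_m` that is the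
endpoint of an edge leaving the cell, let `P u m …` be a designated shortest path
from `u` to `m` inside the subgraph induced by `H_m`; let `T` be the union of the
vertex sets of all these paths, and let `E'` be the set of edges of `G` whose
endpoints lie in distinct Voronoi cells.  Then `|T| ≤ |M| + 2r·|E'|`. -/
theorem stmt14 {V : Type*} [Fintype V] [LinearOrder V] (G : SimpleGraph V)
    (r : ℕ) (M : Set V) (hdom : IsDistDomSet G r M)
    (c : V → V) (hc : IsVoronoiCovering G M c)
    (P : ∀ u m : V, c u = m → (∃ y : V, G.Adj u y ∧ c y ≠ m) → G.Walk u m)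
    (hP : ∀ (u m : V) (h1 : c u = m) (h2 : ∃ y : V, G.Adj u y ∧ c y ≠ m),
      (∀ x ∈ (P u m h1 h2).support, c x = m) ∧
      (∀ q : G.Walk u m, (∀ x ∈ q.support, c x = m) →
        (P u m h1 h2).length ≤ q.length))
    (T : Set V)
    (hT : T = {x : V | ∃ (m : V) (_ : m ∈ M) (u : V) (h1 : c u = m)
      (h2 : ∃ y : V, G.Adj u y ∧ c y ≠ m), x ∈ (P u m h1 h2).support})
    (E' : Set (Sym2 V))
    (hE' : E' = {e : Sym2 V | ∃ x y : V, G.Adj x y ∧ c x ≠ c y ∧ e = s(x, y)}) :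
    T.ncard ≤ M.ncard + 2 * r * E'.ncard := by
  classical
  have hlen : ∀ (u : V) (h2 : ∃ y : V, G.Adj u y ∧ c y ≠ c u),
      (P u (c u) rfl h2).length ≤ r := by
    intro u h2
    obtain ⟨huM, hur, humin⟩ := hc u
    obtain ⟨q, hq⟩ := hur.exists_walk_length_eq_dist
    have ha := (hP u (c u) rfl h2).2 q (voronoi_geodesic G M c hc u q hq)
    obtain ⟨m, hm, p, hp⟩ := hdom u
    have hb : G.dist u m ≤ p.length := SimpleGraph.dist_le p
    rcases humin m hm ⟨p⟩ with h | ⟨h, _⟩ <;> omega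
  let f : V → Finset V := fun u =>
    if h2 : ∃ y : V, G.Adj u y ∧ c y ≠ c u then
      (P u (c u) rfl h2).support.toFinset.erase (c u) else ∅
  have hf : ∀ u, (f u).card ≤ r := by
    intro u
    by_cases h2 : ∃ y : V, G.Adj u y ∧ c y ≠ c u
    · simp only [f, dif_pos h2]
      rw [Finset.card_erase_of_mem (by simp)]
      have h := List.toFinset_card_le (P u (c u) rfl h2).support
      rw [SimpleGraph.Walk.length_support] at h
      have := hlen u h2
      omega
    · simp only [f, dif_neg h2]
      simp
  let B : Finset V := E'.toFinset.biUnion fun e => e.toFinset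
  have hB : B.card ≤ E'.toFinset.card * 2 := by
    apply Finset.card_biUnion_le_card_mul
    intro e _
    rw [Sym2.card_toFinset]
    split_ifs <;> omega
  have hU : (B.biUnion f).card ≤ B.card * r :=
    Finset.card_biUnion_le_card_mul _ _ _ fun u _ => hf u
  have hsub : T ⊆ ((M.toFinset ∪ B.biUnion f : Finset V) : Set V) := by
    intro x hx
    rw [hT] at hx
    obtain ⟨m, hm, u, rfl, h2, hx⟩ := hx
    rw [Finset.mem_coe, Finset.mem_union]
    by_cases hxm : x = c u
    · left
      rw [hxm]
      simpa using hm
    · right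
      rw [Finset.mem_biUnion]
      refine ⟨u, ?_, ?_⟩
      · obtain ⟨y, hy, hne⟩ := h2
        rw [Finset.mem_biUnion]
        refine ⟨s(u, y), ?_, by simp⟩
        rw [Set.mem_toFinset, hE']
        exact ⟨u, y, hy, hne.symm, rfl⟩
      · simp only [f, dif_pos h2]
        simp [hxm, hx]
  have h1 := Set.ncard_le_ncard hsub (Finset.finite_toSet _)
  rw [Set.ncard_coe_finset] at h1
  have h3 := Finset.card_union_le M.toFinset (B.biUnion f)
  rw [Set.ncard_eq_toFinset_card' M, Set.ncard_eq_toFinset_card' E']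
  have h4 : B.card * r ≤ E'.toFinset.card * 2 * r := Nat.mul_le_mul_right r hB
  have h5 : E'.toFinset.card * 2 * r = 2 * r * E'.toFinset.card := by ring
  omega
end
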